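/- arXiv:math-ph/0603028 — 2 statements merged into one kernel-verified Lean document; each statement's English description precedes it below -/
import Mathlib

section
/- Let (φ,Φ) be a local morphism from the local Lie algebroid data (ρ,C) on ℝ^n with fiber ℝ^m to the local Lie algebroid data (ρ',C') on ℝ^{n'} with fiber ℝ^{m'}, let L' : ℝ^{n'} × ℝ^{m'} → ℝ be C², and define L : ℝ^n × ℝ^m → ℝ by L(x,y) := L'(φ(x), Φ(x)y). Let (x,y) : [t₀,t₁] → ℝ^n × ℝ^m be an admissible C¹ curve for (ρ,C), and set x' := φ ∘ x and y'(t) := Φ(x(t)) y(t). Then (x',y') is an admissible C¹ curve for (ρ',C'), and the Euler–Lagrange expressions are related by EL_α[L;(x,y)](t) = Σ_β Φ^β_α(x(t)) · EL'_β[L';(x',y')](t) for every α and every t ∈ [t₀,t₁]. -/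
/-!
Write `L = L' ∘ (φ, Φ)`, `x' = φ ∘ x`, `y' = Φ(x) y`, and let `p'_β = ∂L'/∂y'^β`, `q'_k = ∂L'/∂x'^k`
along `(x', y')`. The chain rule gives `∂L/∂y^α = Σ_β Φ^β_α p'_β` (`pLy_pullback`) and
`∂L/∂x^i = Σ_k q'_k ∂_i φ^k + Σ_{β,ν} p'_β ∂_i Φ^β_ν y^ν` (`pLx_pullback`).
Differentiating the first identity along the admissible curve, `dΦ^β_α/dt = Σ_{i,ν} ∂_i Φ^β_α ρ^i_ν y^ν`.
In the Euler–Lagrange expression of `L` the `q'` terms are then converted by the admissibility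
condition `Σ_i ∂_i φ^k ρ^i_α = Σ_β ρ'^k_β Φ^β_α`, and the coefficient of `p'_β y^ν` is exactly
the left part of the morphism condition for the indices `α, ν`, hence equals
`Σ_{δ,ε} C'^β_{δε} Φ^δ_α Φ^ε_ν`. This last index computation is `euler_lagrange_algebra`.

The chain rule is used throughout in the form of `hasDerivAt_comp_curve` and
`hasDerivAt_lagrangian_comp_curve`, which express derivatives along a curve by the coordinate
partial derivatives.
-/

open Set

/-- Partial derivative of a scalar function on `ℝ^n` in the `j`-th coordinate direction. -/
noncomputable def pderiv' {n : ℕ} (f : (Fin n → ℝ) → ℝ) (x : Fin n → ℝ) (j : Fin n) : ℝ :=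
  deriv (fun s => f (Function.update x j s)) (x j)

/-- Local Lie algebroid data on `ℝ^n` with fiber `ℝ^m`: smooth anchor coefficients
`ρ^i_α` and smooth structure functions `C^α_{βγ}`, antisymmetric in the lower indices. -/
structure LocalAlgebroidData (n m : ℕ) where
  ρ : (Fin n → ℝ) → Fin n → Fin m → ℝ
  C : (Fin n → ℝ) → Fin m → Fin m → Fin m → ℝ
  smooth_ρ : ContDiff ℝ (⊤ : ℕ∞) ρ
  smooth_C : ContDiff ℝ (⊤ : ℕ∞) C
  antisymm : ∀ x α β γ, C x α β γ = - C x α γ β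

/-- Partial derivative `∂L/∂x^i` of a Lagrangian `L : ℝ^n × ℝ^m → ℝ`. -/
noncomputable def pLx {n m : ℕ} (L : (Fin n → ℝ) × (Fin m → ℝ) → ℝ)
    (x : Fin n → ℝ) (y : Fin m → ℝ) (i : Fin n) : ℝ :=
  pderiv' (fun z => L (z, y)) x i

/-- Partial derivative `∂L/∂y^α` of a Lagrangian `L : ℝ^n × ℝ^m → ℝ`. -/
noncomputable def pLy {n m : ℕ} (L : (Fin n → ℝ) × (Fin m → ℝ) → ℝ)
    (x : Fin n → ℝ) (y : Fin m → ℝ) (α : Fin m) : ℝ :=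
  pderiv' (fun w => L (x, w)) y α

/-- The Euler–Lagrange expression
`EL_α(t) = d/dt[∂L/∂y^α] + Σ_{β,γ} C^γ_{αβ} y^β ∂L/∂y^γ − Σ_i ρ^i_α ∂L/∂x^i`
of a curve `(x,y)`. -/
noncomputable def ELexpr {n m : ℕ} (A : LocalAlgebroidData n m)
    (L : (Fin n → ℝ) × (Fin m → ℝ) → ℝ)
    (x : ℝ → Fin n → ℝ) (y : ℝ → Fin m → ℝ) (α : Fin m) (t : ℝ) : ℝ :=
  deriv (fun s => pLy L (x s) (y s) α) t
    + ∑ β, ∑ γ, A.C (x t) γ α β * y t β * pLy L (x t) (y t) γ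
    - ∑ i, A.ρ (x t) i α * pLx L (x t) (y t) i

/-- The curve `(x,y)` is admissible on `[t₀,t₁]`: `(x^i)' = Σ_α ρ^i_α(x) y^α`. -/
def IsAdmissible {n m : ℕ} (A : LocalAlgebroidData n m) (t₀ t₁ : ℝ)
    (x : ℝ → Fin n → ℝ) (y : ℝ → Fin m → ℝ) : Prop :=
  ∀ t ∈ Icc t₀ t₁, ∀ i, deriv (fun s => x s i) t = ∑ α, A.ρ (x t) i α * y t α

/-- `(x,y)` is a solution of Lagrange's equations for `L` on `[t₀,t₁]`. -/
def IsLagrangeSolution {n m : ℕ} (A : LocalAlgebroidData n m)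
    (L : (Fin n → ℝ) × (Fin m → ℝ) → ℝ) (t₀ t₁ : ℝ)
    (x : ℝ → Fin n → ℝ) (y : ℝ → Fin m → ℝ) : Prop :=
  ∀ α, ∀ t ∈ Icc t₀ t₁,
    deriv (fun s => pLy L (x s) (y s) α) t
        + ∑ β, ∑ γ, A.C (x t) γ α β * y t β * pLy L (x t) (y t) γ
      = ∑ i, A.ρ (x t) i α * pLx L (x t) (y t) i

/-- A local morphism of local Lie algebroid data: a pair of smooth maps `(φ, Φ)`
satisfying the admissibility and morphism conditions. -/
structure LocalMorphism {n m n' m' : ℕ}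
    (A : LocalAlgebroidData n m) (A' : LocalAlgebroidData n' m') where
  φ : (Fin n → ℝ) → Fin n' → ℝ
  Φ : (Fin n → ℝ) → Fin m' → Fin m → ℝ
  smooth_φ : ContDiff ℝ (⊤ : ℕ∞) φ
  smooth_Φ : ContDiff ℝ (⊤ : ℕ∞) Φ
  adm : ∀ x (k : Fin n') (α : Fin m),
    ∑ i, pderiv' (fun z => φ z k) x i * A.ρ x i α
      = ∑ β, A'.ρ (φ x) k β * Φ x β α
  morph : ∀ x (α : Fin m') (μ ν : Fin m),
    (∑ i, (A.ρ x i ν * pderiv' (fun z => Φ z α μ) x i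
            - A.ρ x i μ * pderiv' (fun z => Φ z α ν) x i))
      + (∑ β, Φ x α β * A.C x β μ ν)
      - (∑ β, ∑ γ, A'.C (φ x) α β γ * Φ x β μ * Φ x γ ν) = 0

theorem pderiv_eq_fderiv {n : ℕ} {f : (Fin n → ℝ) → ℝ} {x : Fin n → ℝ}
    (hf : DifferentiableAt ℝ f x) (j : Fin n) :
    pderiv' f x j = fderiv ℝ f x (Pi.single j 1) := by
  have h : HasFDerivAt f (fderiv ℝ f x) (Function.update x j (x j)) := by
    simpa using hf.hasFDerivAt
  exact (h.comp_hasDerivAt (x j) (hasDerivAt_update x j (x j))).deriv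

theorem clm_apply_eq_sum {n : ℕ} (l : (Fin n → ℝ) →L[ℝ] ℝ) (v : Fin n → ℝ) :
    l v = ∑ i, l (Pi.single i 1) * v i := by
  conv_lhs => rw [pi_eq_sum_univ' v]
  simp [map_sum, mul_comm]

/-- Chain rule along a curve, in coordinates. -/
theorem hasDerivAt_comp_curve {n : ℕ} {f : (Fin n → ℝ) → ℝ} {c : ℝ → Fin n → ℝ}
    {v : Fin n → ℝ} {t : ℝ} (hf : DifferentiableAt ℝ f (c t)) (hc : HasDerivAt c v t) :
    HasDerivAt (fun s => f (c s)) (∑ i, pderiv' f (c t) i * v i) t := by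
  have h := hf.hasFDerivAt.comp_hasDerivAt t hc
  rw [clm_apply_eq_sum] at h
  simp only [pderiv_eq_fderiv hf]
  exact h

theorem pLx_eq_fderiv {n m : ℕ} {L : (Fin n → ℝ) × (Fin m → ℝ) → ℝ} (hL : Differentiable ℝ L)
    (x : Fin n → ℝ) (y : Fin m → ℝ) (i : Fin n) :
    pLx L x y i = fderiv ℝ L (x, y) (Pi.single i 1, 0) := by
  have h : HasFDerivAt L (fderiv ℝ L (x, y)) (Function.update x i (x i), y) := by
    simpa using (hL (x, y)).hasFDerivAt
  exact (h.comp_hasDerivAt (x i)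
    ((hasDerivAt_update x i (x i)).prodMk (hasDerivAt_const (x i) y))).deriv

theorem pLy_eq_fderiv {n m : ℕ} {L : (Fin n → ℝ) × (Fin m → ℝ) → ℝ} (hL : Differentiable ℝ L)
    (x : Fin n → ℝ) (y : Fin m → ℝ) (α : Fin m) :
    pLy L x y α = fderiv ℝ L (x, y) (0, Pi.single α 1) := by
  have h : HasFDerivAt L (fderiv ℝ L (x, y)) (x, Function.update y α (y α)) := by
    simpa using (hL (x, y)).hasFDerivAt
  exact (h.comp_hasDerivAt (y α)
    ((hasDerivAt_const (y α) x).prodMk (hasDerivAt_update y α (y α)))).deriv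

/-- Chain rule for a Lagrangian along a curve `(a, b)`, in coordinates. -/
theorem hasDerivAt_lagrangian_comp_curve {n m : ℕ} {L : (Fin n → ℝ) × (Fin m → ℝ) → ℝ}
    (hL : Differentiable ℝ L) {a : ℝ → Fin n → ℝ} {b : ℝ → Fin m → ℝ}
    {u : Fin n → ℝ} {v : Fin m → ℝ} {t : ℝ} (ha : HasDerivAt a u t) (hb : HasDerivAt b v t) :
    HasDerivAt (fun s => L (a s, b s))
      (∑ i, pLx L (a t) (b t) i * u i + ∑ β, pLy L (a t) (b t) β * v β) t := by
  have h := (hL (a t, b t)).hasFDerivAt.comp_hasDerivAt t (ha.prodMk hb)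
  have e : fderiv ℝ L (a t, b t) (u, v)
      = ∑ i, pLx L (a t) (b t) i * u i + ∑ β, pLy L (a t) (b t) β * v β := by
    simp only [pLx_eq_fderiv hL, pLy_eq_fderiv hL]
    have h1 := clm_apply_eq_sum
      ((fderiv ℝ L (a t, b t)).comp (ContinuousLinearMap.inl ℝ _ _)) u
    have h2 := clm_apply_eq_sum
      ((fderiv ℝ L (a t, b t)).comp (ContinuousLinearMap.inr ℝ _ _)) v
    simp only [ContinuousLinearMap.comp_apply, ContinuousLinearMap.inl_apply,
      ContinuousLinearMap.inr_apply] at h1 h2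
    rw [← h1, ← h2, ← map_add]
    simp
  rw [e] at h
  exact h

theorem pLy_pullback {n m n' m' : ℕ} {L' : (Fin n' → ℝ) × (Fin m' → ℝ) → ℝ}
    (hL' : Differentiable ℝ L') (φ : (Fin n → ℝ) → Fin n' → ℝ)
    (Φ : (Fin n → ℝ) → Fin m' → Fin m → ℝ) (x : Fin n → ℝ) (y : Fin m → ℝ) (α : Fin m) :
    pLy (fun p : (Fin n → ℝ) × (Fin m → ℝ) =>
        L' (φ p.1, fun β => ∑ δ, Φ p.1 β δ * p.2 δ)) x y α
      = ∑ β, pLy L' (φ x) (fun β => ∑ δ, Φ x β δ * y δ) β * Φ x β α := by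
  have hb : HasDerivAt (fun s (β : Fin m') => ∑ δ, Φ x β δ * Function.update y α s δ)
      (fun β => Φ x β α) (y α) := by
    rw [hasDerivAt_pi]
    intro β
    have h := HasDerivAt.fun_sum (u := Finset.univ) fun δ _ =>
      ((hasDerivAt_pi.1 (hasDerivAt_update y α (y α))) δ).const_mul (Φ x β δ)
    simpa [Pi.single_apply] using h
  have h := (hasDerivAt_lagrangian_comp_curve hL' (hasDerivAt_const (y α) (φ x)) hb).deriv
  simpa [pLy, pderiv'] using h

theorem pLx_pullback {n m n' m' : ℕ} {L' : (Fin n' → ℝ) × (Fin m' → ℝ) → ℝ}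
    (hL' : Differentiable ℝ L') {φ : (Fin n → ℝ) → Fin n' → ℝ} (hφ : Differentiable ℝ φ)
    {Φ : (Fin n → ℝ) → Fin m' → Fin m → ℝ} (hΦ : Differentiable ℝ Φ)
    (x : Fin n → ℝ) (y : Fin m → ℝ) (i : Fin n) :
    pLx (fun p : (Fin n → ℝ) × (Fin m → ℝ) =>
        L' (φ p.1, fun β => ∑ δ, Φ p.1 β δ * p.2 δ)) x y i
      = ∑ k, pLx L' (φ x) (fun β => ∑ δ, Φ x β δ * y δ) k * pderiv' (fun z => φ z k) x i
        + ∑ β, pLy L' (φ x) (fun β => ∑ δ, Φ x β δ * y δ) β *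
            ∑ ν, pderiv' (fun z => Φ z β ν) x i * y ν := by
  -- By definition `pderiv'` is the derivative along the coordinate line through `x`.
  have key : ∀ f : (Fin n → ℝ) → ℝ, Differentiable ℝ f →
      HasDerivAt (fun s => f (Function.update x i s)) (pderiv' f x i) (x i) := fun f hf =>
    ((hf _).comp (x i)
      (hasDerivAt_update x i (x i)).differentiableAt).hasDerivAt
  have ha : HasDerivAt (fun s => φ (Function.update x i s))
      (fun k => pderiv' (fun z => φ z k) x i) (x i) :=
    hasDerivAt_pi.2 fun k => key _ (differentiable_pi.1 hφ k)
  have hb : HasDerivAt (fun s (β : Fin m') => ∑ δ, Φ (Function.update x i s) β δ * y δ)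
      (fun β => ∑ ν, pderiv' (fun z => Φ z β ν) x i * y ν) (x i) :=
    hasDerivAt_pi.2 fun β => HasDerivAt.fun_sum fun δ _ =>
      (key _ (differentiable_pi.1 (differentiable_pi.1 hΦ β) δ)).mul_const (y δ)
  have h := (hasDerivAt_lagrangian_comp_curve hL' ha hb).deriv
  simpa [pLx, pderiv'] using h

/-- The index computation at a fixed time and a fixed index `α`. Here `p, q` are the partial
derivatives `∂L'/∂y', ∂L'/∂x'`, `dp` is the time derivative of `p`, `ra i = ρ^i_α`,
`Fa β = Φ^β_α`, `Ca γ ν = C^γ_{αν}`, and `Dφ`, `DΦ` are the partial derivatives of `φ`, `Φ`,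
with `DΦa β i = ∂_i Φ^β_α`. -/
theorem euler_lagrange_algebra {n m n' m' : ℕ}
    (p dp : Fin m' → ℝ) (q : Fin n' → ℝ) (y : Fin m → ℝ)
    (ρ : Fin n → Fin m → ℝ) (ra : Fin n → ℝ) (Φ : Fin m' → Fin m → ℝ) (Fa : Fin m' → ℝ)
    (Ca : Fin m → Fin m → ℝ) (ρ' : Fin n' → Fin m' → ℝ) (C' : Fin m' → Fin m' → Fin m' → ℝ)
    (Dφ : Fin n' → Fin n → ℝ) (DΦ : Fin m' → Fin m → Fin n → ℝ) (DΦa : Fin m' → Fin n → ℝ)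
    (hadm : ∀ k, ∑ i, Dφ k i * ra i = ∑ β, ρ' k β * Fa β)
    (hmorph : ∀ β ν, (∑ i, (ρ i ν * DΦa β i - ra i * DΦ β ν i)) + (∑ γ, Φ β γ * Ca γ ν)
      - (∑ δ, ∑ ε, C' β δ ε * Fa δ * Φ ε ν) = 0) :
    (∑ β, (dp β * Fa β + p β * ∑ i, DΦa β i * ∑ ν, ρ i ν * y ν))
      + ∑ ν, ∑ γ, Ca γ ν * y ν * (∑ β, p β * Φ β γ)
      - ∑ i, ra i * (∑ k, q k * Dφ k i + ∑ β, p β * ∑ ν, DΦ β ν i * y ν)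
    = ∑ δ, Fa δ * (dp δ + ∑ ε, ∑ β, C' β δ ε * (∑ ν, Φ ε ν * y ν) * p β
        - ∑ k, ρ' k δ * q k) := by
  have h1 : ∑ i, ra i * ∑ k, q k * Dφ k i = ∑ δ, Fa δ * ∑ k, ρ' k δ * q k := by
    calc _ = ∑ k, q k * ∑ i, Dφ k i * ra i := by
          simp only [Finset.mul_sum]
          rw [Finset.sum_comm]
          refine Finset.sum_congr rfl fun _ _ => Finset.sum_congr rfl fun _ _ => by ring
      _ = ∑ k, q k * ∑ β, ρ' k β * Fa β := by simp only [hadm]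
      _ = _ := by
          simp only [Finset.mul_sum]
          rw [Finset.sum_comm]
          refine Finset.sum_congr rfl fun _ _ => Finset.sum_congr rfl fun _ _ => by ring
  -- Every remaining term is a combination of the products `p β * y ν`.
  have h2 : ∑ β, p β * ∑ i, DΦa β i * ∑ ν, ρ i ν * y ν
      = ∑ β, ∑ ν, p β * y ν * ∑ i, ρ i ν * DΦa β i := by
    refine Finset.sum_congr rfl fun β _ => ?_
    simp only [Finset.mul_sum]
    rw [Finset.sum_comm]
    refine Finset.sum_congr rfl fun _ _ => Finset.sum_congr rfl fun _ _ => by ring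
  have h3 : ∑ i, ra i * ∑ β, p β * ∑ ν, DΦ β ν i * y ν
      = ∑ β, ∑ ν, p β * y ν * ∑ i, ra i * DΦ β ν i := by
    simp only [Finset.mul_sum]
    rw [Finset.sum_comm]
    refine Finset.sum_congr rfl fun _ _ => ?_
    rw [Finset.sum_comm]
    refine Finset.sum_congr rfl fun _ _ => Finset.sum_congr rfl fun _ _ => by ring
  have h4 : ∑ ν, ∑ γ, Ca γ ν * y ν * (∑ β, p β * Φ β γ)
      = ∑ β, ∑ ν, p β * y ν * ∑ γ, Φ β γ * Ca γ ν := by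
    rw [Finset.sum_comm (s := Finset.univ (α := Fin m'))]
    refine Finset.sum_congr rfl fun _ _ => ?_
    simp only [Finset.mul_sum]
    rw [Finset.sum_comm]
    refine Finset.sum_congr rfl fun _ _ => Finset.sum_congr rfl fun _ _ => by ring
  have h5 : ∑ δ, Fa δ * ∑ ε, ∑ β, C' β δ ε * (∑ ν, Φ ε ν * y ν) * p β
      = ∑ β, ∑ ν, p β * y ν * ∑ δ, ∑ ε, C' β δ ε * Fa δ * Φ ε ν := by
    calc _ = ∑ δ, ∑ ε, ∑ β, ∑ ν, p β * y ν * (C' β δ ε * Fa δ * Φ ε ν) := by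
          simp only [Finset.mul_sum, Finset.sum_mul]
          refine Finset.sum_congr rfl fun _ _ => Finset.sum_congr rfl fun _ _ =>
            Finset.sum_congr rfl fun _ _ => Finset.sum_congr rfl fun _ _ => by ring
      _ = ∑ δ, ∑ β, ∑ ν, ∑ ε, p β * y ν * (C' β δ ε * Fa δ * Φ ε ν) := by
          refine Finset.sum_congr rfl fun _ _ => ?_
          rw [Finset.sum_comm]
          exact Finset.sum_congr rfl fun _ _ => Finset.sum_comm
      _ = _ := by
          simp only [Finset.mul_sum]
          rw [Finset.sum_comm]
          exact Finset.sum_congr rfl fun _ _ => Finset.sum_comm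
  have h6 : (∑ β, ∑ ν, p β * y ν * ∑ i, ρ i ν * DΦa β i)
      + (∑ β, ∑ ν, p β * y ν * ∑ γ, Φ β γ * Ca γ ν)
      - (∑ β, ∑ ν, p β * y ν * ∑ i, ra i * DΦ β ν i)
      = ∑ β, ∑ ν, p β * y ν * ∑ δ, ∑ ε, C' β δ ε * Fa δ * Φ ε ν := by
    simp only [← Finset.sum_add_distrib, ← Finset.sum_sub_distrib]
    refine Finset.sum_congr rfl fun β _ => Finset.sum_congr rfl fun ν _ => ?_
    have h := hmorph β ν
    rw [Finset.sum_sub_distrib] at h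
    linear_combination (p β * y ν) * h
  have h7 : ∑ β, dp β * Fa β = ∑ δ, Fa δ * dp δ :=
    Finset.sum_congr rfl fun _ _ => mul_comm _ _
  simp only [mul_add, mul_sub, Finset.sum_add_distrib, Finset.sum_sub_distrib]
  rw [h1, h2, h3, h4, h5, h7]
  linear_combination h6

/-- **Morphisms relate Euler–Lagrange expressions (coordinate form).**
If `(φ,Φ)` is a local morphism, `L = L' ∘ (φ,Φ)` and `(x,y)` is admissible, then the
image curve `(φ∘x, Φ(x)y)` is an admissible C¹ curve and
`EL_α[L;(x,y)] = Σ_β Φ^β_α(x) EL'_β[L';(x',y')]`. -/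
theorem morphism_relates_euler_lagrange
    {n m n' m' : ℕ} {A : LocalAlgebroidData n m} {A' : LocalAlgebroidData n' m'}
    (F : LocalMorphism A A')
    (L' : (Fin n' → ℝ) × (Fin m' → ℝ) → ℝ) (hL' : ContDiff ℝ 2 L')
    (t₀ t₁ : ℝ) (ht : t₀ < t₁)
    (x : ℝ → Fin n → ℝ) (y : ℝ → Fin m → ℝ)
    (hx : ContDiff ℝ 1 x) (hy : ContDiff ℝ 1 y)
    (hadm : IsAdmissible A t₀ t₁ x y) :
    (ContDiff ℝ 1 (fun t => F.φ (x t))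
      ∧ ContDiff ℝ 1 (fun t (β : Fin m') => ∑ α, F.Φ (x t) β α * y t α)
      ∧ IsAdmissible A' t₀ t₁ (fun t => F.φ (x t))
          (fun t β => ∑ α, F.Φ (x t) β α * y t α))
    ∧ (∀ α, ∀ t ∈ Icc t₀ t₁,
        ELexpr A (fun p => L' (F.φ p.1, fun β => ∑ δ, F.Φ p.1 β δ * p.2 δ)) x y α t
          = ∑ β, F.Φ (x t) β α *
              ELexpr A' L' (fun s => F.φ (x s))
                (fun s β => ∑ δ, F.Φ (x s) β δ * y s δ) β t) := by
  have hφ : Differentiable ℝ F.φ := F.smooth_φ.differentiable (by simp)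
  have hΦ : Differentiable ℝ F.Φ := F.smooth_Φ.differentiable (by simp)
  have hLd : Differentiable ℝ L' := hL'.differentiable (by simp)
  have hx' : ContDiff ℝ 1 (fun t => F.φ (x t)) :=
    (F.smooth_φ.of_le (by exact_mod_cast le_top)).comp hx
  have hΦx : ContDiff ℝ 1 (fun t => F.Φ (x t)) :=
    (F.smooth_Φ.of_le (by exact_mod_cast le_top)).comp hx
  have hy' : ContDiff ℝ 1 (fun t (β : Fin m') => ∑ α, F.Φ (x t) β α * y t α) :=
    contDiff_pi.2 fun β => ContDiff.sum fun α _ =>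
      (contDiff_pi.1 (contDiff_pi.1 hΦx β) α).mul (contDiff_pi.1 hy α)
  have hxd : ∀ t ∈ Icc t₀ t₁, HasDerivAt x (fun i => ∑ ν, A.ρ (x t) i ν * y t ν) t := by
    intro t ht
    refine hasDerivAt_pi.2 fun i => ?_
    rw [← hadm t ht i]
    exact (differentiable_pi.1 (hx.differentiable (by simp)) i t).hasDerivAt
  refine ⟨⟨hx', hy', ?_⟩, ?_⟩
  · intro t ht k
    rw [(hasDerivAt_comp_curve (f := fun z => F.φ z k) (differentiable_pi.1 hφ k _)
      (hxd t ht)).deriv]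
    calc _ = ∑ α, (∑ i, pderiv' (fun z => F.φ z k) (x t) i * A.ρ (x t) i α) * y t α := by
          simp only [Finset.mul_sum, Finset.sum_mul]
          rw [Finset.sum_comm]
          refine Finset.sum_congr rfl fun _ _ => Finset.sum_congr rfl fun _ _ => by ring
      _ = ∑ α, (∑ β, A'.ρ (F.φ (x t)) k β * F.Φ (x t) β α) * y t α := by
          simp only [F.adm]
      _ = _ := by
          simp only [Finset.mul_sum, Finset.sum_mul]
          rw [Finset.sum_comm]
          refine Finset.sum_congr rfl fun _ _ => Finset.sum_congr rfl fun _ _ => by ring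
  · intro α t ht
    -- The momenta of `L'` along the image curve are differentiable in time since `L'` is `C²`.
    have hp : ∀ β, Differentiable ℝ (fun s => pLy L' (F.φ (x s))
        (fun β => ∑ δ, F.Φ (x s) β δ * y s δ) β) := by
      intro β
      simp only [pLy_eq_fderiv hLd]
      have h1 : Differentiable ℝ (fderiv ℝ L') :=
        (hL'.fderiv_right (m := 1) (by norm_num)).differentiable (by simp)
      have h2 := h1.comp ((hx'.differentiable (by simp)).prodMk (hy'.differentiable (by simp)))
      exact h2.clm_apply (differentiable_const _)
    have hd : HasDerivAt (fun s => ∑ β, pLy L' (F.φ (x s))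
        (fun β => ∑ δ, F.Φ (x s) β δ * y s δ) β * F.Φ (x s) β α) _ t :=
      HasDerivAt.fun_sum (u := Finset.univ) fun β _ => ((hp β) t).hasDerivAt.mul
        (hasDerivAt_comp_curve (f := fun z => F.Φ z β α)
          (differentiable_pi.1 (differentiable_pi.1 hΦ β) α _) (hxd t ht))
    unfold ELexpr
    simp only [pLy_pullback hLd, pLx_pullback hLd hφ hΦ]
    rw [hd.deriv]
    exact euler_lagrange_algebra _ _ _ (y t) (A.ρ (x t)) (fun i => A.ρ (x t) i α) (F.Φ (x t))
      (fun β => F.Φ (x t) β α) (fun γ ν => A.C (x t) γ α ν) (A'.ρ (F.φ (x t)))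
      (A'.C (F.φ (x t))) (fun k i => pderiv' (fun z => F.φ z k) (x t) i)
      (fun β ν i => pderiv' (fun z => F.Φ z β ν) (x t) i)
      (fun β i => pderiv' (fun z => F.Φ z β α) (x t) i)
      (fun k => F.adm (x t) k α) (fun β ν => F.morph (x t) β α ν)
end

section
/- Representation of tangent vectors to the space of admissible curves (coordinate form): Let (ρ,C) be local Lie algebroid data on ℝ^n with fiber ℝ^m satisfying the first structure equation, and let (x,a) : J = [t₀,t₁] → ℝ^n × ℝ^m be an admissible C¹ curve. Let Z : J → ℝ^m be continuous and let W : J → ℝ^n be a C¹ map satisfying the linearized admissibility equation (W^i)'(t) = Σ_{j,α} ∂ρ^i_α/∂x^j(x(t)) W^j(t) a^α(t) + Σ_α ρ^i_α(x(t)) Z^α(t) for all i and t ∈ J. Suppose there are t₂ ∈ J and b ∈ ℝ^m with W^i(t₂) = Σ_α ρ^i_α(x(t₂)) b^α for all i. Then there exists a unique C¹ map σ : J → ℝ^m with σ(t₂) = b satisfying (σ^α)'(t) + Σ_{γ,β} C^α_{γβ}(x(t)) a^γ(t) σ^β(t) = Z^α(t) for all α and t ∈ J; moreover this σ satisfies W^i(t)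 = Σ_α ρ^i_α(x(t)) σ^α(t) for all i and all t ∈ J. -/
/-!
The section `σ` is obtained by solving the linear initial value problem `σ' + P σ = Z`,
`σ(t₂) = b`, where `P^α_β = Σ_γ C^α_{γβ}(x) a^γ` is continuous in time
(`exists_linear_ode_solution`).

To see that `W = ρ(x) σ`, consider the defect `u = W - ρ(x) σ`. By the chain rule, admissibility,
the linearized equation for `W` and the equation for `σ`, the derivative of `u` is computed; the
first structure equation contracted with `a` and `σ` (`structureEq_contract`) turns it into the
homogeneous linear equation `u' = Q u` with `Q^i_j = Σ_α ∂ρ^i_α/∂x^j a^α`. As `u(t₂) = 0`,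
Grönwall's inequality on both sides of `t₂` gives `u = 0` on the interval
(`eq_zero_of_norm_deriv_le`). The same argument applied to the difference of two solutions gives
uniqueness of `σ`.

Picard–Lindelöf as available is local in time, so global existence for the linear equation is
derived from it by truncating the linear term outside a large cube, whose size comes from
Grönwall's a priori bound.
-/

open Set

/-- The first structure equation of local Lie algebroid data. -/
def FirstStructureEq {n m : ℕ} (A : LocalAlgebroidData n m) : Prop :=
  ∀ (x : Fin n → ℝ) (i : Fin n) (α β : Fin m),
    ∑ j, (A.ρ x j α * pderiv' (fun z => A.ρ z i β) x j
           - A.ρ x j β * pderiv' (fun z => A.ρ z i α) x j)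
      = ∑ γ, A.ρ x i γ * A.C x γ α β

/-- Grönwall's inequality on both sides of the base point `t₂`. -/
lemma norm_le_gronwallBound_two_sided {E : Type*} [NormedAddCommGroup E] [NormedSpace ℝ E]
    {u u' : ℝ → E} {K ε t₀ t₁ t₂ : ℝ} (hK : 0 ≤ K) (hε : 0 ≤ ε) (ht₂ : t₂ ∈ Icc t₀ t₁)
    (hu : ∀ t ∈ Icc t₀ t₁, HasDerivAt u (u' t) t)
    (hb : ∀ t ∈ Icc t₀ t₁, ‖u' t‖ ≤ K * ‖u t‖ + ε) {t : ℝ} (ht : t ∈ Icc t₀ t₁) :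
    ‖u t‖ ≤ gronwallBound ‖u t₂‖ K ε (t₁ - t₀) := by
  have hmono := gronwallBound_mono (norm_nonneg (u t₂)) hε hK
  rcases le_total t₂ t with h | h
  · have hsub : ∀ s ∈ Icc t₂ t, s ∈ Icc t₀ t₁ := fun s hs =>
      ⟨ht₂.1.trans hs.1, hs.2.trans ht.2⟩
    refine (norm_le_gronwallBound_of_norm_deriv_right_le (f := u) (f' := u') (a := t₂) (b := t)
      (fun s hs => (hu s (hsub s hs)).continuousAt.continuousWithinAt)
      (fun s hs => (hu s (hsub s (Ico_subset_Icc_self hs))).hasDerivWithinAt) le_rfl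
      (fun s hs => hb s (hsub s (Ico_subset_Icc_self hs))) t ⟨h, le_rfl⟩).trans (hmono ?_)
    linarith [ht.2, ht₂.1]
  -- backward in time: reverse the curve, `s ↦ u (-s)` on `[-t₂, -t]`
  · have hsub : ∀ s ∈ Icc (-t₂) (-t), -s ∈ Icc t₀ t₁ := fun s hs =>
      ⟨by linarith [hs.2, ht.1], by linarith [hs.1, ht₂.2]⟩
    have hd : ∀ s ∈ Icc (-t₂) (-t), HasDerivAt (fun s => u (-s)) (-u' (-s)) s := fun s hs => by
      simpa [Function.comp_def] using (hu _ (hsub s hs)).scomp s (hasDerivAt_neg s)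
    have := norm_le_gronwallBound_of_norm_deriv_right_le (f := fun s => u (-s))
      (f' := fun s => -u' (-s)) (δ := ‖u t₂‖) (K := K) (ε := ε) (a := -t₂) (b := -t)
      (fun s hs => (hd s hs).continuousAt.continuousWithinAt)
      (fun s hs => (hd s (Ico_subset_Icc_self hs)).hasDerivWithinAt) (by simp)
      (fun s hs => by simpa using hb _ (hsub s (Ico_subset_Icc_self hs))) (-t)
      ⟨neg_le_neg h, le_rfl⟩
    simp only [neg_neg] at this
    refine this.trans (hmono ?_)
    linarith [ht.1, ht₂.2]

/-- A solution of a homogeneous linear differential inequality that vanishes at one point of an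
interval vanishes on the interval. -/
lemma eq_zero_of_norm_deriv_le {E : Type*} [NormedAddCommGroup E] [NormedSpace ℝ E]
    {u u' : ℝ → E} {K t₀ t₁ t₂ : ℝ} (hK : 0 ≤ K) (ht₂ : t₂ ∈ Icc t₀ t₁)
    (hu : ∀ t ∈ Icc t₀ t₁, HasDerivAt u (u' t) t)
    (hb : ∀ t ∈ Icc t₀ t₁, ‖u' t‖ ≤ K * ‖u t‖) (h0 : u t₂ = 0) {t : ℝ} (ht : t ∈ Icc t₀ t₁) :
    u t = 0 := by
  have := norm_le_gronwallBound_two_sided hK le_rfl ht₂ hu (by simpa using hb) ht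
  rwa [h0, norm_zero, gronwallBound_ε0_δ0, norm_le_zero_iff] at this

/-- A continuous family of square matrices is uniformly bounded, as operators for the sup norm, on
a compact interval. -/
lemma exists_norm_mulVec_le {k : ℕ} {P : ℝ → Matrix (Fin k) (Fin k) ℝ} (hP : Continuous P)
    (t₀ t₁ : ℝ) : ∃ K : ℝ, 0 ≤ K ∧ ∀ t ∈ Icc t₀ t₁, ∀ v, ‖(P t).mulVec v‖ ≤ K * ‖v‖ := by
  have hc : Continuous fun t => ∑ i, ∑ j, |P t i j| := by
    refine continuous_finsetSum _ fun i _ => continuous_finsetSum _ fun j _ => ?_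
    exact (hP.matrix_elem i j).abs
  obtain ⟨K, hK⟩ := isCompact_Icc.exists_bound_of_continuousOn (s := Icc t₀ t₁) hc.continuousOn
  refine ⟨max K 0, le_max_right _ _, fun t ht v => ?_⟩
  refine (pi_norm_le_iff_of_nonneg (by positivity)).2 fun i => ?_
  calc ‖(P t).mulVec v i‖ ≤ ∑ j, ‖P t i j * v j‖ :=
        norm_sum_le Finset.univ fun j => P t i j * v j
    _ ≤ ∑ j, |P t i j| * ‖v‖ := by
        refine Finset.sum_le_sum fun j _ => ?_
        rw [norm_mul, Real.norm_eq_abs]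
        exact mul_le_mul_of_nonneg_left (norm_le_pi_norm v j) (abs_nonneg _)
    _ = (∑ j, |P t i j|) * ‖v‖ := by rw [Finset.sum_mul]
    _ ≤ max K 0 * ‖v‖ := by
        refine mul_le_mul_of_nonneg_right ?_ (norm_nonneg _)
        refine (Finset.single_le_sum (f := fun i => ∑ j, |P t i j|)
          (fun i _ => Finset.sum_nonneg fun j _ => abs_nonneg _) (Finset.mem_univ i)).trans ?_
        exact ((le_abs_self _).trans (hK t ht)).trans (le_max_left _ _)

/-- Componentwise truncation of a vector to the cube `[-R, R]^k`. -/
noncomputable def clampVec {k : ℕ} (R : ℝ) (v : Fin k → ℝ) : Fin k → ℝ :=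
  fun i => max (-R) (min R (v i))

lemma clampVec_eq_self {k : ℕ} {R : ℝ} {v : Fin k → ℝ} (h : ‖v‖ ≤ R) : clampVec R v = v := by
  funext i
  have := abs_le.1 ((norm_le_pi_norm v i).trans h)
  simp [clampVec, this.1, this.2]

lemma norm_clampVec_sub_le {k : ℕ} (R : ℝ) (v w : Fin k → ℝ) :
    ‖clampVec R v - clampVec R w‖ ≤ ‖v - w‖ := by
  refine (pi_norm_le_iff_of_nonneg (norm_nonneg _)).2 fun i => ?_
  refine le_trans ?_ (norm_le_pi_norm (v - w) i)
  have h1 := abs_max_sub_max_le_abs (min R (v i)) (min R (w i)) (-R)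
  have h2 := abs_min_sub_min_le_max R (v i) R (w i)
  simp only [sub_self, abs_zero, abs_nonneg, max_eq_right] at h2
  simp only [clampVec, Pi.sub_apply, Real.norm_eq_abs]
  rw [max_comm (-R), max_comm (-R)]
  exact h1.trans h2

lemma norm_clampVec_le {k : ℕ} {R : ℝ} (hR : 0 ≤ R) (v : Fin k → ℝ) : ‖clampVec R v‖ ≤ ‖v‖ := by
  have h := norm_clampVec_sub_le R v 0
  rwa [clampVec_eq_self (v := 0) (by simpa using hR), sub_zero, sub_zero] at h

lemma norm_clampVec_le_radius {k : ℕ} {R : ℝ} (hR : 0 ≤ R) (v : Fin k → ℝ) :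
    ‖clampVec R v‖ ≤ R := by
  refine (pi_norm_le_iff_of_nonneg hR).2 fun i => ?_
  rw [Real.norm_eq_abs, abs_le]
  exact ⟨le_max_left _ _, max_le (by linarith) (min_le_left _ _)⟩

lemma continuous_clampVec {k : ℕ} (R : ℝ) : Continuous (clampVec (k := k) R) := by
  unfold clampVec; fun_prop

/-- Global solvability of the linear initial value problem `σ' + P σ = Z` on a compact interval,
by a curve that is `C¹` on the whole real line. The linear term is truncated at a radius
`R` taken from Grönwall's a priori bound; the truncated field is bounded, so Picard–Lindelöf applies
on the whole interval, and its solution obeys the same bound, so the truncation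
never acts on it. -/
lemma exists_linear_ode_solution {k : ℕ} {P : ℝ → Matrix (Fin k) (Fin k) ℝ} (hP : Continuous P)
    {Z : ℝ → Fin k → ℝ} (hZ : Continuous Z) {t₀ t₁ t₂ : ℝ} (ht₂ : t₂ ∈ Icc t₀ t₁)
    (b : Fin k → ℝ) :
    ∃ σ : ℝ → Fin k → ℝ, ContDiff ℝ 1 σ ∧ σ t₂ = b ∧
      ∀ t ∈ Icc t₀ t₁, HasDerivAt σ (Z t - (P t).mulVec (σ t)) t := by
  have ht : t₀ ≤ t₁ := ht₂.1.trans ht₂.2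
  obtain ⟨K, hK0, hK⟩ := exists_norm_mulVec_le hP t₀ t₁
  obtain ⟨c, hc⟩ := isCompact_Icc.exists_bound_of_continuousOn (s := Icc t₀ t₁) hZ.continuousOn
  have hc0 : 0 ≤ c := (norm_nonneg _).trans (hc t₂ ht₂)
  set R : ℝ := gronwallBound ‖b‖ K c (t₁ - t₀) with hR
  have hR0 : 0 ≤ R := by
    have := gronwallBound_mono (norm_nonneg b) hc0 hK0 (sub_nonneg.2 ht)
    rw [gronwallBound_x0] at this
    exact (norm_nonneg b).trans this
  let f : ℝ → (Fin k → ℝ) → Fin k → ℝ := fun t v => Z t - (P t).mulVec (clampVec R v)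
  have hfc : Continuous (Function.uncurry f) := by
    refine (hZ.comp continuous_fst).sub ?_
    exact (hP.comp continuous_fst).matrix_mulVec ((continuous_clampVec R).comp continuous_snd)
  have hfb : ∀ t ∈ Icc t₀ t₁, ∀ v, ‖f t v‖ ≤ K * ‖v‖ + c := fun t ht v => by
    have h1 := norm_sub_le (Z t) ((P t).mulVec (clampVec R v))
    have h2 := (hK t ht (clampVec R v)).trans
      (mul_le_mul_of_nonneg_left (norm_clampVec_le hR0 v) hK0)
    have := hc t ht
    simp only [f]; linarith
  have hfB : ∀ t ∈ Icc t₀ t₁, ∀ v, ‖f t v‖ ≤ K * R + c := fun t ht v => by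
    have h1 := norm_sub_le (Z t) ((P t).mulVec (clampVec R v))
    have h2 := (hK t ht (clampVec R v)).trans
      (mul_le_mul_of_nonneg_left (norm_clampVec_le_radius hR0 v) hK0)
    have := hc t ht
    simp only [f]; linarith
  have hB0 : 0 ≤ K * R + c := by positivity
  have hPL : IsPicardLindelof f (⟨t₂, ht₂⟩ : Icc t₀ t₁) b
      (Real.toNNReal ((K * R + c) * (t₁ - t₀))) 0 (Real.toNNReal (K * R + c)) (Real.toNNReal K) := by
    refine ⟨fun t ht => ?_, fun v _ => ?_, fun t ht v _ => ?_, ?_⟩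
    · refine (LipschitzWith.of_dist_le_mul fun v w => ?_).lipschitzOnWith
      rw [dist_eq_norm, dist_eq_norm, Real.coe_toNNReal _ hK0]
      have : f t v - f t w = -((P t).mulVec (clampVec R v - clampVec R w)) := by
        simp only [f, Matrix.mulVec_sub]; abel
      rw [this, norm_neg]
      exact (hK t ht _).trans (mul_le_mul_of_nonneg_left (norm_clampVec_sub_le R v w) hK0)
    · exact (hfc.comp (by fun_prop : Continuous fun t : ℝ => (t, v))).continuousOn
    · rw [Real.coe_toNNReal _ hB0]; exact hfB t ht v
    · rw [Real.coe_toNNReal _ hB0,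
        Real.coe_toNNReal _ (mul_nonneg hB0 (sub_nonneg.2 ht)), NNReal.coe_zero, sub_zero]
      refine mul_le_mul_of_nonneg_left (max_le ?_ ?_) hB0
      · exact sub_le_sub_left ht₂.1 t₁
      · exact sub_le_sub_right ht₂.2 t₀
  obtain ⟨α, hα0, hα⟩ := hPL.exists_eq_forall_mem_Icc_hasDerivWithinAt₀
  have hαc : ContinuousOn α (Icc t₀ t₁) := fun t ht => (hα t ht).continuousWithinAt
  -- `α` is controlled only on `[t₀, t₁]`: freeze it outside and integrate to get a `C¹` extension
  let g : ℝ → Fin k → ℝ := fun t => f t (IccExtend ht ((Icc t₀ t₁).domRestrict α) t)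
  have hg : Continuous g :=
    hfc.comp (continuous_id.prodMk (continuousOn_iff_continuous_domRestrict.1 hαc).Icc_extend')
  let σ : ℝ → Fin k → ℝ := fun t => b + ∫ τ in t₂..t, g τ
  have hσ : ∀ t, HasDerivAt σ (g t) t := fun t =>
    (intervalIntegral.integral_hasDerivAt_right (hg.intervalIntegrable _ _)
      (hg.stronglyMeasurableAtFilter _ _) hg.continuousAt).const_add b
  have hσ0 : σ t₂ = b := by simp [σ]
  have hσα : ∀ t ∈ Icc t₀ t₁, σ t = α t := by
    intro t ht'
    have hsub : uIcc t₂ t ⊆ Icc t₀ t₁ := uIcc_subset_Icc ht₂ ht'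
    have h1 : ∫ τ in t₂..t, g τ = ∫ τ in t₂..t, f τ (α τ) :=
      intervalIntegral.integral_congr fun τ hτ => by
        simp only [g, IccExtend_of_mem ht _ (hsub hτ), domRestrict_apply]
    have h2 := ODE.picard_eq_of_hasDerivAt (f := f) (u := univ) (t₀ := t₂) (t := t) (α := α)
      hfc.continuousOn (fun s hs => (hα s (hsub hs)).mono hsub) (mapsTo_univ _ _)
    simp only [ODE.picard_apply] at h2
    simp only [σ, h1]
    rw [← h2, show α t₂ = b from hα0]
  have hσf : ∀ t ∈ Icc t₀ t₁, HasDerivAt σ (f t (σ t)) t := fun t ht' => by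
    have : g t = f t (σ t) := by
      simp only [g, IccExtend_of_mem ht _ ht', domRestrict_apply, hσα t ht']
    exact this ▸ hσ t
  refine ⟨σ, ?_, hσ0, fun t ht' => ?_⟩
  · refine contDiff_one_iff_deriv.2 ⟨fun t => (hσ t).differentiableAt, ?_⟩
    rwa [show deriv σ = g from funext fun t => (hσ t).deriv]
  · have hle : ‖σ t‖ ≤ R := by
      have := norm_le_gronwallBound_two_sided hK0 hc0 ht₂ hσf (fun s hs => hfb s hs _) ht'
      rwa [hσ0] at this
    have := hσf t ht'
    simp only [f] at this
    rwa [clampVec_eq_self hle] at this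

lemma pderiv'_eq_fderiv {n : ℕ} {f : (Fin n → ℝ) → ℝ} (hf : Differentiable ℝ f)
    (x : Fin n → ℝ) (j : Fin n) : pderiv' f x j = fderiv ℝ f x (Pi.single j 1) := by
  have h : HasFDerivAt f (fderiv ℝ f x) (Function.update x j (x j)) := by
    rw [Function.update_eq_self]; exact (hf x).hasFDerivAt
  exact (h.comp_hasDerivAt (x j) (hasDerivAt_update x j (x j))).deriv

/-- Chain rule along a curve, in terms of coordinate partial derivatives. -/
lemma hasDerivAt_comp_pderiv' {n : ℕ} {f : (Fin n → ℝ) → ℝ} (hf : Differentiable ℝ f)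
    {x : ℝ → Fin n → ℝ} {x' : Fin n → ℝ} {t : ℝ} (hx : HasDerivAt x x' t) :
    HasDerivAt (fun s => f (x s)) (∑ j, pderiv' f (x t) j * x' j) t := by
  have h := (hf (x t)).hasFDerivAt.comp_hasDerivAt t hx
  refine h.congr_deriv ?_
  have hx' : x' = ∑ j, x' j • (Pi.single j 1 : Fin n → ℝ) := by
    funext i; simp [Pi.single_apply]
  have h' := congrArg (fderiv ℝ f (x t)) hx'
  rw [map_sum] at h'
  rw [h']
  exact Finset.sum_congr rfl fun j _ => by
    rw [pderiv'_eq_fderiv hf, map_smul, smul_eq_mul, mul_comm]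

/-- The contraction of the first structure equation with `a^α s^β`. It is the identity that makes
the inhomogeneous terms cancel in the equation for the defect `W - ρ σ`. -/
lemma structureEq_contract {n m : ℕ} {A : LocalAlgebroidData n m} (hA : FirstStructureEq A)
    (x : Fin n → ℝ) (a s : Fin m → ℝ) (i : Fin n) :
    (∑ α, (∑ j, pderiv' (fun z => A.ρ z i α) x j * ∑ β, A.ρ x j β * a β) * s α)
      - ∑ α, A.ρ x i α * ∑ γ, ∑ β, A.C x α γ β * a γ * s β
      = ∑ j, (∑ α, pderiv' (fun z => A.ρ z i α) x j * a α) * ∑ β, A.ρ x j β * s β := by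
  have key : ∑ α, A.ρ x i α * ∑ γ, ∑ β, A.C x α γ β * a γ * s β
      = ∑ γ, ∑ β, (∑ j, (A.ρ x j γ * pderiv' (fun z => A.ρ z i β) x j
           - A.ρ x j β * pderiv' (fun z => A.ρ z i γ) x j)) * (a γ * s β) := by
    simp only [hA x i, Finset.sum_mul, Finset.mul_sum]
    rw [Finset.sum_comm]
    refine Finset.sum_congr rfl fun γ _ => ?_
    rw [Finset.sum_comm]
    refine Finset.sum_congr rfl fun β _ => Finset.sum_congr rfl fun α _ => by ring
  rw [key]
  simp only [Finset.sum_sub_distrib, sub_mul, Finset.sum_mul, Finset.mul_sum]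
  have e1 : ∑ α, ∑ j, ∑ β, pderiv' (fun z => A.ρ z i α) x j * (A.ρ x j β * a β) * s α
      = ∑ γ, ∑ β, ∑ j, A.ρ x j γ * pderiv' (fun z => A.ρ z i β) x j * (a γ * s β) := by
    conv_lhs => rw [Finset.sum_comm]
    conv_rhs => enter [2, γ]; rw [Finset.sum_comm]
    conv_rhs => rw [Finset.sum_comm]
    refine Finset.sum_congr rfl fun j _ => ?_
    rw [Finset.sum_comm]
    exact Finset.sum_congr rfl fun _ _ => Finset.sum_congr rfl fun _ _ => by ring
  have e2 : ∑ j, ∑ β, ∑ α, pderiv' (fun z => A.ρ z i α) x j * a α * (A.ρ x j β * s β)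
      = ∑ γ, ∑ β, ∑ j, A.ρ x j β * pderiv' (fun z => A.ρ z i γ) x j * (a γ * s β) := by
    conv_rhs => enter [2, γ]; rw [Finset.sum_comm]
    conv_rhs => rw [Finset.sum_comm]
    refine Finset.sum_congr rfl fun j _ => ?_
    rw [Finset.sum_comm]
    exact Finset.sum_congr rfl fun _ _ => Finset.sum_congr rfl fun _ _ => by ring
  rw [e1]
  rw [e2]; ring

/-- **Representation of tangent vectors to the space of admissible curves
(coordinate form).**  If `(W,Z)` satisfies the linearized admissibility equation along
an admissible curve `(x,a)` and `W(t₂) = ρ(x(t₂)) b` at some `t₂ ∈ J`, then there is a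
unique C¹ section `σ` along the base curve with `σ(t₂) = b` solving
`(σ^α)' + Σ C^α_{γβ} a^γ σ^β = Z^α` on `J`, and this `σ` moreover satisfies
`W = ρ(x) σ` on `J`; i.e. `(W,Z)` is the admissible variation `Ξ_{(x,a)}(σ)`. -/
theorem tangent_vector_representation
    {n m : ℕ} (A : LocalAlgebroidData n m) (hA : FirstStructureEq A)
    (t₀ t₁ : ℝ) (ht : t₀ < t₁)
    (x : ℝ → Fin n → ℝ) (a : ℝ → Fin m → ℝ)
    (hx : ContDiff ℝ 1 x) (ha : ContDiff ℝ 1 a)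
    (hadm : IsAdmissible A t₀ t₁ x a)
    (Z : ℝ → Fin m → ℝ) (hZ : Continuous Z)
    (W : ℝ → Fin n → ℝ) (hW : ContDiff ℝ 1 W)
    (hlin : ∀ t ∈ Icc t₀ t₁, ∀ i,
      deriv (fun s => W s i) t
        = (∑ j, ∑ α, pderiv' (fun z => A.ρ z i α) (x t) j * W t j * a t α)
          + ∑ α, A.ρ (x t) i α * Z t α)
    (t₂ : ℝ) (ht₂ : t₂ ∈ Icc t₀ t₁) (b : Fin m → ℝ)
    (hb : ∀ i, W t₂ i = ∑ α, A.ρ (x t₂) i α * b α) :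
    ∃ σ : ℝ → Fin m → ℝ, ContDiff ℝ 1 σ ∧ σ t₂ = b
      ∧ (∀ t ∈ Icc t₀ t₁, ∀ α,
          deriv (fun s => σ s α) t
            + ∑ γ, ∑ β, A.C (x t) α γ β * a t γ * σ t β = Z t α)
      ∧ (∀ t ∈ Icc t₀ t₁, ∀ i, W t i = ∑ α, A.ρ (x t) i α * σ t α)
      ∧ (∀ σ' : ℝ → Fin m → ℝ, ContDiff ℝ 1 σ' → σ' t₂ = b →
          (∀ t ∈ Icc t₀ t₁, ∀ α,
            deriv (fun s => σ' s α) t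
              + ∑ γ, ∑ β, A.C (x t) α γ β * a t γ * σ' t β = Z t α) →
          Set.EqOn σ σ' (Icc t₀ t₁)) := by
  have hρ : ∀ i α, ContDiff ℝ (⊤ : ℕ∞) fun z => A.ρ z i α := fun i α =>
    contDiff_pi.1 (contDiff_pi.1 A.smooth_ρ i) α
  have hρd : ∀ i α, Differentiable ℝ fun z => A.ρ z i α := fun i α =>
    (hρ i α).differentiable (by simp)
  have hC : ∀ α γ β, Continuous fun z => A.C z α γ β := fun α γ β =>
    (contDiff_pi.1 (contDiff_pi.1 (contDiff_pi.1 A.smooth_C α) γ) β).continuous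
  have hac : ∀ α, Continuous fun t => a t α := fun α =>
    (continuous_apply α).comp ha.continuous
  -- the coefficient matrices of the equations for `σ` and for the defect `W - ρ σ`
  let P : ℝ → Matrix (Fin m) (Fin m) ℝ := fun t α β => ∑ γ, A.C (x t) α γ β * a t γ
  have hP : Continuous P := continuous_matrix fun α β =>
    continuous_finsetSum _ fun γ _ => ((hC α γ β).comp hx.continuous).mul (hac γ)
  let Q : ℝ → Matrix (Fin n) (Fin n) ℝ := fun t i j =>
    ∑ α, pderiv' (fun z => A.ρ z i α) (x t) j * a t α
  have hQ : Continuous Q := by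
    refine continuous_matrix fun i j => continuous_finsetSum _ fun α _ => Continuous.mul ?_ (hac α)
    simp only [pderiv'_eq_fderiv (hρd i α)]
    exact (((hρ i α).continuous_fderiv (by simp)).comp hx.continuous).clm_apply continuous_const
  have hPv : ∀ t v α, (P t).mulVec v α = ∑ γ, ∑ β, A.C (x t) α γ β * a t γ * v β := by
    intro t v α
    simp only [P, Matrix.mulVec, dotProduct, Finset.sum_mul]
    rw [Finset.sum_comm]
  obtain ⟨σ, hσ1, hσ0, hσ⟩ := exists_linear_ode_solution hP hZ ht₂ b
  have hode : ∀ τ : ℝ → Fin m → ℝ, ContDiff ℝ 1 τ →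
      (∀ t ∈ Icc t₀ t₁, ∀ α, deriv (fun s => τ s α) t
        + ∑ γ, ∑ β, A.C (x t) α γ β * a t γ * τ t β = Z t α) →
      ∀ t ∈ Icc t₀ t₁, HasDerivAt τ (Z t - (P t).mulVec (τ t)) t := by
    intro τ hτ h t ht'
    refine hasDerivAt_pi.2 fun α => ?_
    have hd : DifferentiableAt ℝ (fun s => τ s α) t :=
      differentiableAt_pi.1 (hτ.differentiable (by simp) t) α
    convert hd.hasDerivAt using 1
    rw [Pi.sub_apply, hPv, ← h t ht' α]; ring
  refine ⟨σ, hσ1, hσ0, fun t ht' α => ?_, fun t ht' i => ?_, fun σ' hs1 hs0 hs t ht' => ?_⟩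
  · rw [(hasDerivAt_pi.1 (hσ t ht') α).deriv, Pi.sub_apply, hPv]; ring
  · obtain ⟨K, hK0, hK⟩ := exists_norm_mulVec_le hQ t₀ t₁
    let u : ℝ → Fin n → ℝ := fun t i => W t i - ∑ α, A.ρ (x t) i α * σ t α
    have hu : ∀ t ∈ Icc t₀ t₁, HasDerivAt u ((Q t).mulVec (u t)) t := by
      intro t ht'
      refine hasDerivAt_pi.2 fun i => ?_
      have hWi : HasDerivAt (fun s => W s i) _ t :=
        (differentiableAt_pi.1 (hW.differentiable (by simp) t) i).hasDerivAt
      rw [hlin t ht' i] at hWi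
      have hxt : HasDerivAt x (fun i => ∑ α, A.ρ (x t) i α * a t α) t :=
        hasDerivAt_pi.2 fun i => hadm t ht' i ▸
          (differentiableAt_pi.1 (hx.differentiable (by simp) t) i).hasDerivAt
      have hS := HasDerivAt.fun_sum (u := Finset.univ) fun α _ =>
        (hasDerivAt_comp_pderiv' (hρd i α) hxt).fun_mul (hasDerivAt_pi.1 (hσ t ht') α)
      refine (hWi.fun_sub hS).congr_deriv ?_
      have hc := structureEq_contract hA (x t) (a t) (σ t) i
      have hQv : (Q t).mulVec (u t) i = ∑ j, (∑ α, pderiv' (fun z => A.ρ z i α) (x t) j * a t α)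
          * (W t j - ∑ β, A.ρ (x t) j β * σ t β) := rfl
      simp only [hQv, Pi.sub_apply, hPv, mul_sub, Finset.sum_add_distrib, Finset.sum_sub_distrib]
      have hw : ∑ j, ∑ α, pderiv' (fun z => A.ρ z i α) (x t) j * W t j * a t α
          = ∑ j, (∑ α, pderiv' (fun z => A.ρ z i α) (x t) j * a t α) * W t j := by
        simp only [Finset.sum_mul]
        exact Finset.sum_congr rfl fun _ _ => Finset.sum_congr rfl fun _ _ => by ring
      rw [hw, ← hc]; ring
    have h0 : u t₂ = 0 := by
      funext i; simp [u, hb i, hσ0]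
    have := congrFun (eq_zero_of_norm_deriv_le hK0 ht₂ hu (fun t ht' => hK t ht' _) h0 ht') i
    exact sub_eq_zero.1 this
  · obtain ⟨K, hK0, hK⟩ := exists_norm_mulVec_le hP t₀ t₁
    refine sub_eq_zero.1 (eq_zero_of_norm_deriv_le (u := fun t => σ t - σ' t) hK0 ht₂
      (fun t ht' => (hσ t ht').sub (hode σ' hs1 hs t ht')) (fun t ht' => ?_)
      (by simp [hσ0, hs0]) ht')
    rw [sub_sub_sub_cancel_left, ← Matrix.mulVec_sub, norm_sub_rev (σ t)]
    exact hK t ht' _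
end
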